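/- arXiv:0802.1496 — 3 statements merged into one kernel-verified Lean document; each statement's English description precedes it below -/
import Mathlib

section
/- Let L be a Lie-like algebra^{1-st} induced by a nonempty set S. For k ∈ S define the adjoint map ad_k : L → End(L) by ad_k(x)(a) := [x, a]_k. Then the family {ad_k}_{k∈S} makes L an ordinary module over itself: for all x, y ∈ L and h, k ∈ S one has ad_h([x,y]_k) = ad_h(x)∘ad_k(y) − ad_h(y)∘ad_k(x) and ad_k(x)∘ad_h(y) = ad_h(x)∘ad_k(y). -/
/-!
The mixed Jacobi identities for `(h, k)` at `(x, y, z)` and for `(k, h)` at `(y, z, x)` share two of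
their three terms. Comparing them gives `[[x, y]_h, z]_k = [[x, y]_k, z]_h`: in a double bracket the
two indices may be exchanged. By anti-symmetry this is the second module law, and it turns the
mixed Jacobi identity into the first one.
-/

section

variable {K L V S : Type*} [CommSemiring K] [AddCommGroup L] [Module K L]
  [AddCommGroup V] [Module K V]

/-- The Jacobi-like identity^{1-st} for a family of brackets `[x, y]_k = br k x y`; for `h = k` it
is the usual Jacobi identity. -/
def JacobiLike (br : S → L →ₗ[K] L →ₗ[K] L) : Prop :=
  ∀ (h k : S) (x y z : L), br k (br h x y) z + br h (br k y z) x + br k (br h z x) y = 0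

/-- `L` with the brackets `[x, y]_k = br k x y` is a Lie-like algebra^{1-st} induced by `S`.
Since `br k x` is the map `y ↦ [x, y]_k`, the family `br` is at once the family of brackets and
the family of adjoint maps `ad_k`. -/
structure IsLieLike (br : S → L →ₗ[K] L →ₗ[K] L) : Prop where
  antisymm : ∀ (k : S) (x y : L), br k x y = -br k y x
  jacobi : JacobiLike br

/-- The maps `f k : L → End V` make `V` an ordinary module over `L` with the brackets `br`. -/
structure IsOrdinaryModule (br : S → L →ₗ[K] L →ₗ[K] L) (f : S → L →ₗ[K] V →ₗ[K] V) : Prop where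
  map_bracket : ∀ (h k : S) (x y : L), f h (br k x y) = f h x ∘ₗ f k y - f h y ∘ₗ f k x
  comp_swap : ∀ (h k : S) (x y : L), f k x ∘ₗ f h y = f h x ∘ₗ f k y

variable {br : S → L →ₗ[K] L →ₗ[K] L}

theorem JacobiLike.bracket_bracket_swap (jacobi : JacobiLike br) (h k : S) (x y z : L) :
    br k (br h x y) z = br h (br k x y) z := by
  have common_terms : br k (br h x y) z + (br h (br k y z) x + br k (br h z x) y) =
      br h (br k x y) z + (br h (br k y z) x + br k (br h z x) y) := by
    rw [← add_assoc, jacobi h k x y z, add_comm, jacobi k h y z x]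
  exact add_right_cancel common_terms

namespace IsLieLike

theorem ad_comp_ad_swap (hbr : IsLieLike br) (h k : S) (x y : L) :
    br k x ∘ₗ br h y = br h x ∘ₗ br k y := by
  ext z
  calc br k x (br h y z) = -br k (br h y z) x := hbr.antisymm ..
    _ = -br h (br k y z) x := by rw [hbr.jacobi.bracket_bracket_swap]
    _ = br h x (br k y z) := (hbr.antisymm ..).symm

theorem ad_bracket (hbr : IsLieLike br) (h k : S) (x y : L) :
    br h (br k x y) = br h x ∘ₗ br k y - br h y ∘ₗ br k x := by
  ext z
  have x_outside : br k (br h y z) x = -br h x (br k y z) := by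
    rw [hbr.jacobi.bracket_bracket_swap, hbr.antisymm]
  have y_outside : br h (br k z x) y = br h y (br k x z) := by
    rw [hbr.antisymm h, hbr.antisymm k z, map_neg, neg_neg]
  have jacobi := hbr.jacobi k h x y z
  rw [x_outside, y_outside] at jacobi
  rw [LinearMap.sub_apply, LinearMap.comp_apply, LinearMap.comp_apply, ← sub_eq_zero, ← jacobi]
  abel

end IsLieLike

theorem stmt_3_general (hbr : IsLieLike br) : IsOrdinaryModule br br where
  map_bracket := hbr.ad_bracket
  comp_swap := hbr.ad_comp_ad_swap

end

/-- For a Lie-like algebra^{1-st} `L` induced by `S`, the adjoint maps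
`ad_k(x) = [x, ·]_k` make `L` an ordinary module over itself:
`ad_h([x,y]_k) = ad_h(x)∘ad_k(y) − ad_h(y)∘ad_k(x)` and
`ad_k(x)∘ad_h(y) = ad_h(x)∘ad_k(y)`. -/
theorem stmt_3 (K : Type*) [Field K] (L : Type*) [AddCommGroup L] [Module K L]
    (S : Type*) [Nonempty S]
    (br : S → L →ₗ[K] L →ₗ[K] L)
    (anti : ∀ (k : S) (x y : L), br k x y = - br k y x)
    (jacobi : ∀ (h k : S) (x y z : L),
      br k (br h x y) z + br h (br k y z) x + br k (br h z x) y = 0) :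
    ∀ (h k : S) (x y : L),
      (br h (br k x y) = br h x ∘ₗ br k y - br h y ∘ₗ br k x) ∧
      (br k x ∘ₗ br h y = br h x ∘ₗ br k y) := by
  have adjoint : IsOrdinaryModule br br := stmt_3_general ⟨anti, jacobi⟩
  exact fun h k x y => ⟨adjoint.map_bracket h k x y, adjoint.comp_swap h k x y⟩
end

section
/- Let L be a Lie-like algebra^{2-nd} induced by a nonempty set S, and let L^{ann,−} be its minus annihilator, i.e. the subspace of L spanned by all elements ⟨x,y⟩_h − ⟨x,y⟩_k with x, y ∈ L and h, k ∈ S. Then L^{ann,−} is an ideal of L (⟨a, x⟩_s ∈ L^{ann,−} and ⟨x, a⟩_s ∈ L^{ann,−} for all x ∈ L, a ∈ L^{ann,−}, s ∈ S), and moreover L^{ann,−} is contained in the plus annihilator L^{ann,+} (the span of all ⟨x,y⟩_h + ⟨y,x⟩_k). -/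
/-- The plus annihilator of a Lie-like algebra^{2-nd}: the subspace spanned by
all elements `⟨x,y⟩_h + ⟨y,x⟩_k` with `x, y ∈ L` and `h, k ∈ S`. -/
def likeAnnPlus2 (K : Type*) [Field K] {L : Type*} [AddCommGroup L] [Module K L]
    {S : Type*} (ang : S → L →ₗ[K] L →ₗ[K] L) : Submodule K L :=
  Submodule.span K {a : L | ∃ x y : L, ∃ h k : S, a = ang h x y + ang k y x}

/-- The minus annihilator of a Lie-like algebra^{2-nd}: the subspace spanned by
all elements `⟨x,y⟩_h − ⟨x,y⟩_k` with `x, y ∈ L` and `h, k ∈ S`. -/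
def likeAnnMinus2 (K : Type*) [Field K] {L : Type*} [AddCommGroup L] [Module K L]
    {S : Type*} (ang : S → L →ₗ[K] L →ₗ[K] L) : Submodule K L :=
  Submodule.span K {a : L | ∃ x y : L, ∃ h k : S, a = ang h x y - ang k x y}

/-!
The Jacobi-like identity and the exchange of indices give
`⟨z, ⟨x, y⟩_h⟩_s = ⟨⟨z, x⟩_s, y⟩_h - ⟨⟨z, y⟩_s, x⟩_h`. Subtracting the same formula for `k`
writes `⟨z, ⟨x, y⟩_h - ⟨x, y⟩_k⟩_s` as a difference of two generators of the minus annihilator.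
Exchanging indices alone shows that `⟨⟨x, y⟩_h - ⟨x, y⟩_k, z⟩_s` equals the generator
`⟨⟨x, y⟩_s, z⟩_h - ⟨⟨x, y⟩_s, z⟩_k`. Finally, `⟨x, y⟩_h - ⟨x, y⟩_k` is the difference of
`⟨x, y⟩_h + ⟨y, x⟩_h` and `⟨x, y⟩_k + ⟨y, x⟩_h`, two generators of the plus annihilator.
-/

section CommRing

variable (R : Type*) [CommRing R] {L : Type*} [AddCommGroup L] [Module R L] {S : Type*}

/-- The plus annihilator of a family of bilinear brackets over a commutative ring. The generators
are written as in `likeAnnPlus2`, which is definitionally the case of a field. -/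
def plusAnnihilator (ang : S → L →ₗ[R] L →ₗ[R] L) : Submodule R L :=
  Submodule.span R {a : L | ∃ x y : L, ∃ h k : S, a = ang h x y + ang k y x}

/-- The minus annihilator of a family of bilinear brackets over a commutative ring. The generators
are written as in `likeAnnMinus2`, which is definitionally the case of a field. -/
def minusAnnihilator (ang : S → L →ₗ[R] L →ₗ[R] L) : Submodule R L :=
  Submodule.span R {a : L | ∃ x y : L, ∃ h k : S, a = ang h x y - ang k x y}

variable {R} {ang : S → L →ₗ[R] L →ₗ[R] L}

theorem bracket_add_bracket_swap_mem_plusAnnihilator (h k : S) (x y : L) :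
    ang h x y + ang k y x ∈ plusAnnihilator R ang :=
  Submodule.subset_span ⟨x, y, h, k, rfl⟩

theorem bracket_sub_bracket_mem_minusAnnihilator (h k : S) (x y : L) :
    ang h x y - ang k x y ∈ minusAnnihilator R ang :=
  Submodule.subset_span ⟨x, y, h, k, rfl⟩

theorem minusAnnihilator_le {p : Submodule R L}
    (hp : ∀ (h k : S) (x y : L), ang h x y - ang k x y ∈ p) :
    minusAnnihilator R ang ≤ p := by
  refine Submodule.span_le.2 ?_
  rintro _ ⟨x, y, h, k, rfl⟩
  exact hp h k x y

theorem minusAnnihilator_le_plusAnnihilator :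
    minusAnnihilator R ang ≤ plusAnnihilator R ang :=
  minusAnnihilator_le fun h k x y => by
    rw [← add_sub_add_right_eq_sub (ang h x y) (ang k x y) (ang h y x)]
    exact sub_mem (bracket_add_bracket_swap_mem_plusAnnihilator h h x y)
      (bracket_add_bracket_swap_mem_plusAnnihilator k h x y)

theorem bracket_mem_minusAnnihilator_of_left_mem
    (swap : ∀ (h k : S) (x y z : L), ang h (ang k x y) z = ang k (ang h x y) z)
    (s : S) {a : L} (ha : a ∈ minusAnnihilator R ang) (z : L) :
    ang s a z ∈ minusAnnihilator R ang := by
  suffices minusAnnihilator R ang ≤ (minusAnnihilator R ang).comap ((ang s).flip z) from this ha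
  refine minusAnnihilator_le fun h k x y => ?_
  rw [Submodule.mem_comap, LinearMap.flip_apply, map_sub, LinearMap.sub_apply, swap s h, swap s k]
  exact bracket_sub_bracket_mem_minusAnnihilator h k (ang s x y) z

theorem bracket_bracket_right_eq_sub
    (leib : ∀ (h k : S) (x y z : L),
      ang h (ang k x y) z = ang k x (ang h y z) + ang k (ang h x z) y)
    (swap : ∀ (h k : S) (x y z : L), ang h (ang k x y) z = ang k (ang h x y) z)
    (s h : S) (z x y : L) :
    ang s z (ang h x y) = ang h (ang s z x) y - ang h (ang s z y) x := by
  rw [leib h s z x y, swap h s z y x, add_sub_cancel_right]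

theorem bracket_mem_minusAnnihilator_of_right_mem
    (leib : ∀ (h k : S) (x y z : L),
      ang h (ang k x y) z = ang k x (ang h y z) + ang k (ang h x z) y)
    (swap : ∀ (h k : S) (x y z : L), ang h (ang k x y) z = ang k (ang h x y) z)
    (s : S) (z : L) {a : L} (ha : a ∈ minusAnnihilator R ang) :
    ang s z a ∈ minusAnnihilator R ang := by
  suffices minusAnnihilator R ang ≤ (minusAnnihilator R ang).comap (ang s z) from this ha
  refine minusAnnihilator_le fun h k x y => ?_
  rw [Submodule.mem_comap, map_sub, bracket_bracket_right_eq_sub leib swap s h,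
    bracket_bracket_right_eq_sub leib swap s k, sub_sub_sub_comm]
  exact sub_mem (bracket_sub_bracket_mem_minusAnnihilator h k (ang s z x) y)
    (bracket_sub_bracket_mem_minusAnnihilator h k (ang s z y) x)

theorem stmt_7_general
    (leib : ∀ (h k : S) (x y z : L),
      ang h (ang k x y) z = ang k x (ang h y z) + ang k (ang h x z) y)
    (swap : ∀ (h k : S) (x y z : L), ang h (ang k x y) z = ang k (ang h x y) z) :
    (∀ (x : L) (a : L) (s : S), a ∈ minusAnnihilator R ang →
      ang s a x ∈ minusAnnihilator R ang ∧ ang s x a ∈ minusAnnihilator R ang) ∧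
    minusAnnihilator R ang ≤ plusAnnihilator R ang :=
  ⟨fun x _ s ha => ⟨bracket_mem_minusAnnihilator_of_left_mem swap s ha x,
    bracket_mem_minusAnnihilator_of_right_mem leib swap s x ha⟩,
    minusAnnihilator_le_plusAnnihilator⟩

end CommRing

/-- The minus annihilator of a Lie-like algebra^{2-nd} is an ideal,
and it is contained in the plus annihilator. -/
theorem stmt_7 (K : Type*) [Field K] (L : Type*) [AddCommGroup L] [Module K L]
    (S : Type*) [Nonempty S]
    (ang : S → L →ₗ[K] L →ₗ[K] L)
    (leib : ∀ (h k : S) (x y z : L),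
      ang h (ang k x y) z = ang k x (ang h y z) + ang k (ang h x z) y)
    (swap : ∀ (h k : S) (x y z : L),
      ang h (ang k x y) z = ang k (ang h x y) z) :
    (∀ (x : L) (a : L) (s : S), a ∈ likeAnnMinus2 K ang →
      ang s a x ∈ likeAnnMinus2 K ang ∧ ang s x a ∈ likeAnnMinus2 K ang) ∧
    likeAnnMinus2 K ang ≤ likeAnnPlus2 K ang :=
  stmt_7_general leib swap
end

section
/- Let L = L₀ ⊕ L₁ be a Lie-like superalgebra^{2-nd} induced by a nonempty set S. Define the plus super annihilator L^{sann,+} as the subspace spanned by all elements ⟨x,y⟩_h + (−1)^{αβ}⟨y,x⟩_k with x ∈ L_α, y ∈ L_β homogeneous and h, k ∈ S, and the minus super annihilator L^{sann,−} as the subspace spanned by all elements ⟨x,y⟩_h − ⟨x,y⟩_k with x, y homogeneous and h, k ∈ S. Then L^{sann,+} and L^{sann,−} are both ideals of L (closed under left and right multiplication by ⟨·,·⟩_s for every s ∈ S), and L^{sann,−} ⊆ L^{sann,+}. -/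
/-- The plus super annihilator of a Lie-like superalgebra^{2-nd}: the subspace
spanned by all `⟨x,y⟩_h + (−1)^{αβ}⟨y,x⟩_k` with `x ∈ L_α`, `y ∈ L_β`
homogeneous and `h, k ∈ S`. -/
def superAnnPlus2 (K : Type*) [Field K] {L : Type*} [AddCommGroup L] [Module K L]
    {S : Type*} (Lg : ZMod 2 → Submodule K L)
    (ang : S → L →ₗ[K] L →ₗ[K] L) : Submodule K L :=
  Submodule.span K {a : L | ∃ α β : ZMod 2, ∃ h k : S, ∃ x ∈ Lg α, ∃ y ∈ Lg β,
    a = ang h x y + ((-1 : K) ^ (α.val * β.val)) • ang k y x}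

/-- The minus super annihilator of a Lie-like superalgebra^{2-nd}: the subspace
spanned by all `⟨x,y⟩_h − ⟨x,y⟩_k` with `x, y` homogeneous and `h, k ∈ S`. -/
def superAnnMinus2 (K : Type*) [Field K] {L : Type*} [AddCommGroup L] [Module K L]
    {S : Type*} (Lg : ZMod 2 → Submodule K L)
    (ang : S → L →ₗ[K] L →ₗ[K] L) : Submodule K L :=
  Submodule.span K {a : L | ∃ α β : ZMod 2, ∃ h k : S, ∃ x ∈ Lg α, ∃ y ∈ Lg β,
    a = ang h x y - ang k x y}

/-!
Combined with the interchange law, the Jacobi-like identity reads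
`⟨z, ⟨x,y⟩_h⟩_s = ⟨⟨z,x⟩_s, y⟩_h − ε(α,β) ⟨⟨z,y⟩_s, x⟩_h`.
The right-hand side depends on the index `h` of the inner bracket only through its outer brackets,
so multiplying a generator of either annihilator from the left yields a combination of generators of
the minus annihilator; for the plus annihilator the cancellation uses `ε(α,β) ε(β,α) = 1`.
Right multiplication of a minus generator is the interchange law, and for `a` in the plus
annihilator `⟨a,z⟩_s` differs by a multiple of `⟨z,a⟩_s` from a generator.
-/

theorem apply_mem_of_mem_span_of_iSup_eq_top {R M N P ι : Type*} [CommSemiring R]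
    [AddCommMonoid M] [Module R M] [AddCommMonoid N] [Module R N] [AddCommMonoid P] [Module R P]
    (B : M →ₗ[R] N →ₗ[R] P) {G : Set M} {p : ι → Submodule R N} (hp : ⨆ γ, p γ = ⊤)
    {I : Submodule R P} (hB : ∀ a ∈ G, ∀ γ, ∀ z ∈ p γ, B a z ∈ I)
    {a : M} (ha : a ∈ Submodule.span R G) (z : N) : B a z ∈ I := by
  have hG : ∀ b ∈ G, B b z ∈ I := by
    intro b hb
    have hle : ⨆ γ, p γ ≤ I.comap (B b) := iSup_le fun γ => hB b hb γ
    exact hle (hp ▸ Submodule.mem_top)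
  have hspan : Submodule.span R G ≤ I.comap (B.flip z) := Submodule.span_le.2 hG
  exact hspan ha

theorem iSup_eq_top_of_codisjoint {A : Type*} [CompleteLattice A] {p : ZMod 2 → A}
    (h : Codisjoint (p 0) (p 1)) : ⨆ α, p α = ⊤ :=
  eq_top_iff.2 (h.eq_top.ge.trans (sup_le (le_iSup p 0) (le_iSup p 1)))

theorem neg_one_pow_mul_neg_one_pow_swap {R : Type*} [Monoid R] [HasDistribNeg R] (m n : ℕ) :
    (-1 : R) ^ (m * n) * (-1 : R) ^ (n * m) = 1 := by
  rw [mul_comm n m, ← pow_add, (Even.add_self _).neg_one_pow]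

section ColorAnnihilators

variable {R L S ι : Type*} [CommRing R] [AddCommGroup L] [Module R L]

/-- Two-sided ideals for a family of brackets: submodules absorbing every bracket in either
argument. Homogeneity of the submodule is not part of the notion. -/
def IsBracketIdeal (ang : S → L →ₗ[R] L →ₗ[R] L) (I : Submodule R L) : Prop :=
  ∀ (x a : L) (s : S), a ∈ I → ang s a x ∈ I ∧ ang s x a ∈ I

theorem isBracketIdeal_span {ang : S → L →ₗ[R] L →ₗ[R] L} {Lg : ι → Submodule R L}
    (htop : ⨆ γ, Lg γ = ⊤) {G : Set L}
    (hright : ∀ s, ∀ a ∈ G, ∀ γ, ∀ z ∈ Lg γ, ang s a z ∈ Submodule.span R G)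
    (hleft : ∀ s, ∀ a ∈ G, ∀ γ, ∀ z ∈ Lg γ, ang s z a ∈ Submodule.span R G) :
    IsBracketIdeal ang (Submodule.span R G) := fun x _ s ha =>
  ⟨apply_mem_of_mem_span_of_iSup_eq_top (ang s) htop (hright s) ha x,
    apply_mem_of_mem_span_of_iSup_eq_top (ang s).flip htop (hleft s) ha x⟩

/-- The plus annihilator for signs `ε α β` in place of `(−1)^{αβ}`; `superAnnPlus2` is
definitionally the case `ι = ZMod 2`, `ε α β = (-1) ^ (α.val * β.val)`. -/
def colorAnnPlus (ε : ι → ι → R) (Lg : ι → Submodule R L) (ang : S → L →ₗ[R] L →ₗ[R] L) :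
    Submodule R L :=
  Submodule.span R {a : L | ∃ α β : ι, ∃ h k : S, ∃ x ∈ Lg α, ∃ y ∈ Lg β,
    a = ang h x y + ε α β • ang k y x}

/-- The minus annihilator for an arbitrary family of homogeneous components; `superAnnMinus2` is
definitionally the case `ι = ZMod 2`. -/
def colorAnnMinus (Lg : ι → Submodule R L) (ang : S → L →ₗ[R] L →ₗ[R] L) : Submodule R L :=
  Submodule.span R {a : L | ∃ α β : ι, ∃ h k : S, ∃ x ∈ Lg α, ∃ y ∈ Lg β,
    a = ang h x y - ang k x y}

section Generators

variable {ε : ι → ι → R} {Lg : ι → Submodule R L} {ang : S → L →ₗ[R] L →ₗ[R] L}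
  {α β : ι} {x y : L}

theorem add_smul_mem_colorAnnPlus (h k : S) (hx : x ∈ Lg α) (hy : y ∈ Lg β) :
    ang h x y + ε α β • ang k y x ∈ colorAnnPlus ε Lg ang :=
  Submodule.subset_span ⟨α, β, h, k, x, hx, y, hy, rfl⟩

theorem sub_mem_colorAnnMinus (h k : S) (hx : x ∈ Lg α) (hy : y ∈ Lg β) :
    ang h x y - ang k x y ∈ colorAnnMinus Lg ang :=
  Submodule.subset_span ⟨α, β, h, k, x, hx, y, hy, rfl⟩

theorem colorAnnMinus_le_colorAnnPlus : colorAnnMinus Lg ang ≤ colorAnnPlus ε Lg ang := by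
  refine Submodule.span_le.2 ?_
  rintro _ ⟨α, β, h, k, x, hx, y, hy, rfl⟩
  rw [← add_sub_add_right_eq_sub _ _ (ε α β • ang h y x)]
  exact sub_mem (add_smul_mem_colorAnnPlus h h hx hy) (add_smul_mem_colorAnnPlus k h hx hy)

end Generators

/-- The laws of a Lie-like superalgebra^{2-nd} with degrees in an arbitrary additive structure `ι`
and signs `ε β γ` in place of `(−1)^{βγ}`, as for Lie color algebras. That the components `Lg α`
span `L` is not included. -/
structure IsLieLikeColorAlgebra [Add ι] (ε : ι → ι → R) (Lg : ι → Submodule R L)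
    (ang : S → L →ₗ[R] L →ₗ[R] L) : Prop where
  bracket_mem : ∀ (k : S) (α β : ι), ∀ x ∈ Lg α, ∀ y ∈ Lg β, ang k x y ∈ Lg (α + β)
  jacobi : ∀ (h k : S) (α β γ : ι), ∀ x ∈ Lg α, ∀ y ∈ Lg β, ∀ z ∈ Lg γ,
    ang k (ang h x y) z = ang h x (ang k y z) + ε β γ • ang h (ang k x z) y
  interchange : ∀ (h k : S) (α β γ : ι), ∀ x ∈ Lg α, ∀ y ∈ Lg β, ∀ z ∈ Lg γ,
    ang k (ang h x y) z = ang h (ang k x y) z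

namespace IsLieLikeColorAlgebra

variable {ε : ι → ι → R} {Lg : ι → Submodule R L} {ang : S → L →ₗ[R] L →ₗ[R] L}
  {α β γ : ι} {x y z : L}

section Add

variable [Add ι]

theorem bracket_bracket_right (hL : IsLieLikeColorAlgebra ε Lg ang) (s h : S)
    (hz : z ∈ Lg γ) (hx : x ∈ Lg α) (hy : y ∈ Lg β) :
    ang s z (ang h x y) = ang h (ang s z x) y - ε α β • ang h (ang s z y) x := by
  rw [hL.jacobi s h γ α β z hz x hx y hy, hL.interchange s h γ β α z hz y hy x hx,
    add_sub_cancel_right]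

theorem bracket_sub_mem_colorAnnMinus (hL : IsLieLikeColorAlgebra ε Lg ang) (s h k : S)
    (hz : z ∈ Lg γ) (hx : x ∈ Lg α) (hy : y ∈ Lg β) :
    ang s z (ang h x y - ang k x y) ∈ colorAnnMinus Lg ang := by
  have hzx : ang s z x ∈ Lg (γ + α) := hL.bracket_mem s γ α z hz x hx
  have hzy : ang s z y ∈ Lg (γ + β) := hL.bracket_mem s γ β z hz y hy
  have expand : ang s z (ang h x y - ang k x y) =
      (ang h (ang s z x) y - ang k (ang s z x) y)
        - ε α β • (ang h (ang s z y) x - ang k (ang s z y) x) := by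
    rw [map_sub, hL.bracket_bracket_right s h hz hx hy, hL.bracket_bracket_right s k hz hx hy]
    module
  rw [expand]
  exact sub_mem (sub_mem_colorAnnMinus h k hzx hy)
    (Submodule.smul_mem _ _ (sub_mem_colorAnnMinus h k hzy hx))

theorem bracket_add_smul_mem_colorAnnMinus (hL : IsLieLikeColorAlgebra ε Lg ang)
    (hε : ε α β * ε β α = 1) (s h k : S) (hz : z ∈ Lg γ) (hx : x ∈ Lg α) (hy : y ∈ Lg β) :
    ang s z (ang h x y + ε α β • ang k y x) ∈ colorAnnMinus Lg ang := by
  have hzx : ang s z x ∈ Lg (γ + α) := hL.bracket_mem s γ α z hz x hx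
  have hzy : ang s z y ∈ Lg (γ + β) := hL.bracket_mem s γ β z hz y hy
  have expand : ang s z (ang h x y + ε α β • ang k y x) =
      (ang h (ang s z x) y - ang k (ang s z x) y)
        - ε α β • (ang h (ang s z y) x - ang k (ang s z y) x) := by
    rw [map_add, map_smul, hL.bracket_bracket_right s h hz hx hy,
      hL.bracket_bracket_right s k hz hy hx, smul_sub (ε α β), smul_smul, hε]
    module
  rw [expand]
  exact sub_mem (sub_mem_colorAnnMinus h k hzx hy)
    (Submodule.smul_mem _ _ (sub_mem_colorAnnMinus h k hzy hx))

theorem sub_bracket_mem_colorAnnMinus (hL : IsLieLikeColorAlgebra ε Lg ang) (s h k : S)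
    (hx : x ∈ Lg α) (hy : y ∈ Lg β) (hz : z ∈ Lg γ) :
    ang s (ang h x y - ang k x y) z ∈ colorAnnMinus Lg ang := by
  rw [map_sub, LinearMap.sub_apply, hL.interchange h s α β γ x hx y hy z hz,
    hL.interchange k s α β γ x hx y hy z hz]
  exact sub_mem_colorAnnMinus h k (hL.bracket_mem s α β x hx y hy) hz

theorem isBracketIdeal_colorAnnMinus (hL : IsLieLikeColorAlgebra ε Lg ang)
    (htop : ⨆ α, Lg α = ⊤) : IsBracketIdeal ang (colorAnnMinus Lg ang) := by
  refine isBracketIdeal_span htop ?_ ?_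
  · rintro s _ ⟨α, β, h, k, x, hx, y, hy, rfl⟩ γ z hz
    exact hL.sub_bracket_mem_colorAnnMinus s h k hx hy hz
  · rintro s _ ⟨α, β, h, k, x, hx, y, hy, rfl⟩ γ z hz
    exact hL.bracket_sub_mem_colorAnnMinus s h k hz hx hy

end Add

section AddCommMagma

variable [AddCommMagma ι]

theorem bracket_add_smul_bracket_mem (hL : IsLieLikeColorAlgebra ε Lg ang) (h k : S)
    (hx : x ∈ Lg α) (hy : y ∈ Lg β) (c : R) :
    ang h x y + c • ang k y x ∈ Lg (α + β) :=
  add_mem (hL.bracket_mem h α β x hx y hy)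
    (Submodule.smul_mem _ c (add_comm α β ▸ hL.bracket_mem k β α y hy x hx))

theorem add_smul_bracket_mem_colorAnnPlus (hL : IsLieLikeColorAlgebra ε Lg ang)
    (hε : ε α β * ε β α = 1) (s h k : S) (hx : x ∈ Lg α) (hy : y ∈ Lg β) (hz : z ∈ Lg γ) :
    ang s (ang h x y + ε α β • ang k y x) z ∈ colorAnnPlus ε Lg ang := by
  have hleft : ang s z (ang h x y + ε α β • ang k y x) ∈ colorAnnPlus ε Lg ang :=
    colorAnnMinus_le_colorAnnPlus (hL.bracket_add_smul_mem_colorAnnMinus hε s h k hz hx hy)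
  exact (Submodule.add_mem_iff_left _ (Submodule.smul_mem _ (ε (α + β) γ) hleft)).1
    (add_smul_mem_colorAnnPlus s s (hL.bracket_add_smul_bracket_mem h k hx hy (ε α β)) hz)

theorem isBracketIdeal_colorAnnPlus (hL : IsLieLikeColorAlgebra ε Lg ang)
    (hε : ∀ α β, ε α β * ε β α = 1) (htop : ⨆ α, Lg α = ⊤) :
    IsBracketIdeal ang (colorAnnPlus ε Lg ang) := by
  refine isBracketIdeal_span htop ?_ ?_
  · rintro s _ ⟨α, β, h, k, x, hx, y, hy, rfl⟩ γ z hz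
    exact hL.add_smul_bracket_mem_colorAnnPlus (hε α β) s h k hx hy hz
  · rintro s _ ⟨α, β, h, k, x, hx, y, hy, rfl⟩ γ z hz
    exact colorAnnMinus_le_colorAnnPlus
      (hL.bracket_add_smul_mem_colorAnnMinus (hε α β) s h k hz hx hy)

end AddCommMagma

end IsLieLikeColorAlgebra

theorem stmt_17_general [AddCommMagma ι] {ε : ι → ι → R} (hε : ∀ α β, ε α β * ε β α = 1)
    {Lg : ι → Submodule R L} (htop : ⨆ α, Lg α = ⊤) {ang : S → L →ₗ[R] L →ₗ[R] L}
    (hL : IsLieLikeColorAlgebra ε Lg ang) :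
    IsBracketIdeal ang (colorAnnPlus ε Lg ang) ∧ IsBracketIdeal ang (colorAnnMinus Lg ang) ∧
      colorAnnMinus Lg ang ≤ colorAnnPlus ε Lg ang :=
  ⟨hL.isBracketIdeal_colorAnnPlus hε htop, hL.isBracketIdeal_colorAnnMinus htop,
    colorAnnMinus_le_colorAnnPlus⟩

end ColorAnnihilators

/-- The plus and minus super annihilators of a Lie-like
superalgebra^{2-nd} are both ideals (closed under left and right multiplication
by `⟨·,·⟩_s` for every `s ∈ S`), and `L^{sann,−} ⊆ L^{sann,+}`. -/
theorem stmt_17 (K : Type*) [Field K] (L : Type*) [AddCommGroup L] [Module K L]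
    (S : Type*) [Nonempty S]
    (Lg : ZMod 2 → Submodule K L) (hdec : IsCompl (Lg 0) (Lg 1))
    (ang : S → L →ₗ[K] L →ₗ[K] L)
    (hgrade : ∀ (k : S) (α β : ZMod 2), ∀ x ∈ Lg α, ∀ y ∈ Lg β,
      ang k x y ∈ Lg (α + β))
    (hjac : ∀ (h k : S) (α β γ : ZMod 2), ∀ x ∈ Lg α, ∀ y ∈ Lg β, ∀ z ∈ Lg γ,
      ang k (ang h x y) z
        = ang h x (ang k y z) + ((-1 : K) ^ (β.val * γ.val)) • ang h (ang k x z) y)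
    (hswap : ∀ (h k : S) (α β γ : ZMod 2), ∀ x ∈ Lg α, ∀ y ∈ Lg β, ∀ z ∈ Lg γ,
      ang k (ang h x y) z = ang h (ang k x y) z) :
    (∀ (x : L) (a : L) (s : S), a ∈ superAnnPlus2 K Lg ang →
      ang s a x ∈ superAnnPlus2 K Lg ang ∧ ang s x a ∈ superAnnPlus2 K Lg ang) ∧
    (∀ (x : L) (a : L) (s : S), a ∈ superAnnMinus2 K Lg ang →
      ang s a x ∈ superAnnMinus2 K Lg ang ∧ ang s x a ∈ superAnnMinus2 K Lg ang) ∧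
    superAnnMinus2 K Lg ang ≤ superAnnPlus2 K Lg ang :=
  stmt_17_general (fun α β => neg_one_pow_mul_neg_one_pow_swap α.val β.val)
    (iSup_eq_top_of_codisjoint hdec.codisjoint) ⟨hgrade, hjac, hswap⟩
end
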